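/- arXiv:2204.01378 — 2 statements merged into one kernel-verified Lean document; each statement's English description precedes it below -/
import Mathlib

section
/- Let M be a metric measure space with liminf_{r→0} μ(B(x,r))/r^d > 0 at relevant points, and suppose the resolvent density satisfies g_λ(y,z) ≥ c_x ϱ(y,z)^{2−d} for y,z near each x ∈ Σ. Let 1 < p < ∞ with d > 2p, and Σ ⊆ M closed with H^{d−2p}(Σ) < ∞ (H denotes Hausdorff measure). Then cap_{2,p}(Σ) = 0. -/
open Set MeasureTheory ENNReal Metric Filter

/-- The resolvent `(2,p)`-capacity built from a symmetric resolvent density `g`: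
`cap_{2,p}(E)` is the infimum of `∫ f^p dμ` over nonnegative measurable `f` with
`∫ g(x,y) f(y) dμ(y) ≥ 1` for all `x ∈ E`. -/
noncomputable def rcapK {M : Type*} [MeasurableSpace M] (μ : Measure M) (p : ℝ)
    (g : M → M → ℝ≥0∞) (E : Set M) : ℝ≥0∞ :=
  ⨅ f ∈ {f : M → ℝ≥0∞ | Measurable f ∧ ∀ x ∈ E, 1 ≤ ∫⁻ y, g x y * f y ∂μ},
    ∫⁻ x, f x ^ p ∂μ

theorem Real.add_rpow_le_rpow_add_mul {p a b : ℝ} (hp : 1 ≤ p) (ha : 0 ≤ a) (hb : 0 ≤ b) :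
    (a + b) ^ p ≤ a ^ p + p * 2 ^ (p - 1) * (a ^ (p - 1) * b + b ^ p) := by
  rcases hb.eq_or_lt with rfl | hb'
  · simp [Real.zero_rpow (by linarith : p ≠ 0)]
  have hu : 0 < a + b := by linarith
  have hsplit (t : ℝ) (ht : 0 < t) : t ^ p = t ^ (p - 1) * t := by
    rw [← Real.rpow_add_one ht.ne', sub_add_cancel]
  have hbern : (a + b) ^ p ≤ a ^ p + p * b * (a + b) ^ (p - 1) := by
    have h := one_add_mul_self_le_rpow_one_add (s := -(b / (a + b)))
      (by rw [neg_le_neg_iff, div_le_one hu]; linarith) hp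
    have hone : 1 + -(b / (a + b)) = a / (a + b) := by field_simp; ring
    rw [hone, Real.div_rpow ha hu.le, le_div_iff₀ (Real.rpow_pos_of_pos hu p)] at h
    have hcancel : b / (a + b) * (a + b) ^ p = b * (a + b) ^ (p - 1) := by
      rw [hsplit _ hu]; field_simp
    linear_combination h + p * hcancel
  have hmax : (a + b) ^ (p - 1) ≤ 2 ^ (p - 1) * (a ^ (p - 1) + b ^ (p - 1)) := by
    have hm : a + b ≤ 2 * max a b := by linarith [le_max_left a b, le_max_right a b]
    have h0 : 0 ≤ p - 1 := by linarith
    refine (Real.rpow_le_rpow hu.le hm h0).trans ?_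
    rw [Real.mul_rpow (by norm_num) (le_max_of_le_left ha)]
    gcongr
    rcases max_choice a b with h | h <;> rw [h]
    · linarith [Real.rpow_nonneg hb (p - 1)]
    · linarith [Real.rpow_nonneg ha (p - 1)]
  calc (a + b) ^ p ≤ a ^ p + p * b * (a + b) ^ (p - 1) := hbern
    _ ≤ a ^ p + p * b * (2 ^ (p - 1) * (a ^ (p - 1) + b ^ (p - 1))) := by gcongr
    _ = _ := by rw [hsplit b hb']; ring

theorem ENNReal.exists_add_rpow_le {p : ℝ} (hp : 1 ≤ p) : ∃ C : ℝ≥0∞, C ≠ ∞ ∧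
    ∀ a b : ℝ≥0∞, a ≠ ∞ → b ≠ ∞ → (a + b) ^ p ≤ a ^ p + C * (a ^ (p - 1) * b + b ^ p) := by
  refine ⟨ENNReal.ofReal (p * 2 ^ (p - 1)), ofReal_ne_top, fun a b ha hb => ?_⟩
  have h0 : 0 ≤ p := by linarith
  have h1 : 0 ≤ p - 1 := by linarith
  rw [← ofReal_toReal ha, ← ofReal_toReal hb]
  have ha' := toReal_nonneg (a := a)
  have hb' := toReal_nonneg (a := b)
  rw [← ofReal_add ha' hb', ofReal_rpow_of_nonneg (by positivity) h0,
    ofReal_rpow_of_nonneg ha' h0, ofReal_rpow_of_nonneg ha' h1, ofReal_rpow_of_nonneg hb' h0,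
    ← ofReal_mul (by positivity), ← ofReal_add (by positivity) (by positivity),
    ← ofReal_mul (by positivity), ← ofReal_add (by positivity) (by positivity)]
  exact ofReal_le_ofReal (Real.add_rpow_le_rpow_add_mul hp ha' hb')

theorem ENNReal.iSup_rpow_le_tsum {ι : Type*} {p : ℝ} (hp : 0 < p) (a : ι → ℝ≥0∞) :
    (⨆ i, a i) ^ p ≤ ∑' i, a i ^ p := by
  rw [← le_rpow_inv_iff hp]
  exact iSup_le fun i => (le_rpow_inv_iff hp).2 (ENNReal.le_tsum i)

theorem rcapK_le {M : Type*} [MeasurableSpace M] {μ : Measure M} {p : ℝ} {g : M → M → ℝ≥0∞}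
    {E : Set M} {f : M → ℝ≥0∞} (hf : Measurable f) (h : ∀ x ∈ E, 1 ≤ ∫⁻ y, g x y * f y ∂μ) :
    rcapK μ p g E ≤ ∫⁻ x, f x ^ p ∂μ :=
  iInf₂_le f ⟨hf, h⟩

theorem exists_lintegral_rpow_lt_of_rcapK_lt {M : Type*} [MeasurableSpace M] {μ : Measure M}
    {p : ℝ} {g : M → M → ℝ≥0∞} {E : Set M} {ε : ℝ≥0∞} (h : rcapK μ p g E < ε) :
    ∃ f : M → ℝ≥0∞, Measurable f ∧ (∀ x ∈ E, 1 ≤ ∫⁻ y, g x y * f y ∂μ) ∧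
      ∫⁻ x, f x ^ p ∂μ < ε := by
  simp only [rcapK, iInf_lt_iff] at h
  obtain ⟨f, ⟨hf, hfE⟩, hlt⟩ := h
  exact ⟨f, hf, hfE, hlt⟩

theorem rcapK_mono {M : Type*} [MeasurableSpace M] {μ : Measure M} {p : ℝ} {g : M → M → ℝ≥0∞}
    {E F : Set M} (h : E ⊆ F) : rcapK μ p g E ≤ rcapK μ p g F :=
  le_iInf₂ fun _ hf => rcapK_le hf.1 fun x hx => hf.2 x (h hx)

theorem rcapK_iUnion_eq_zero {M ι : Type*} [Countable ι] [MeasurableSpace M] {μ : Measure M}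
    {p : ℝ} (hp : 0 < p) {g : M → M → ℝ≥0∞} {E : ι → Set M} (h : ∀ i, rcapK μ p g (E i) = 0) :
    rcapK μ p g (⋃ i, E i) = 0 := by
  refine nonpos_iff_eq_zero.1 (_root_.le_of_forall_pos_le_add fun ε hε => ?_)
  obtain ⟨δ, hδ, hsum⟩ := ENNReal.exists_pos_sum_of_countable' hε.ne' ι
  choose f hf hfE hfp using fun i =>
    exists_lintegral_rpow_lt_of_rcapK_lt (show rcapK μ p g (E i) < δ i from (h i).symm ▸ hδ i)
  rw [zero_add]
  calc rcapK μ p g (⋃ i, E i) ≤ ∫⁻ x, (⨆ i, f i x) ^ p ∂μ := by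
        refine rcapK_le (Measurable.iSup hf) fun x hx => ?_
        obtain ⟨i, hi⟩ := mem_iUnion.1 hx
        refine (hfE i x hi).trans (lintegral_mono fun y => ?_)
        gcongr
        exact le_iSup (fun j => f j y) i
    _ ≤ ∫⁻ x, ∑' i, f i x ^ p ∂μ := lintegral_mono fun x => ENNReal.iSup_rpow_le_tsum hp _
    _ = ∑' i, ∫⁻ x, f i x ^ p ∂μ := lintegral_tsum fun i => ((hf i).pow_const p).aemeasurable
    _ ≤ ∑' i, δ i := ENNReal.tsum_le_tsum fun i => (hfp i).le
    _ ≤ ε := hsum.le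

/-- A set has capacity zero as soon as it admits bounded test functions that are bounded in `L^p`
and arbitrarily small in `L^1`: averages of such functions are eventually small in `L^p`. -/
theorem rcapK_eq_zero_of_lintegral_small {M : Type*} [MeasurableSpace M] {μ : Measure M}
    {p : ℝ} (hp : 1 < p) {g : M → M → ℝ≥0∞} {E : Set M} {A : ℝ≥0∞} (hA : A ≠ ∞)
    (h : ∀ ε : ℝ≥0∞, 0 < ε → ∃ f : M → ℝ≥0∞, Measurable f ∧ (∃ L : ℝ≥0∞, L ≠ ∞ ∧ ∀ x, f x ≤ L) ∧
      (∀ x ∈ E, 1 ≤ ∫⁻ y, g x y * f y ∂μ) ∧ ∫⁻ x, f x ^ p ∂μ ≤ A ∧ ∫⁻ x, f x ∂μ ≤ ε) :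
    rcapK μ p g E = 0 := by
  obtain ⟨C, hC, hadd⟩ := ENNReal.exists_add_rpow_le hp.le
  have hp1 : 0 < p - 1 := by linarith
  set D : ℝ≥0∞ := C * (1 + A) with hD
  have hDtop : D ≠ ∞ := by finiteness
  have hsum : ∀ n : ℕ, ∃ F : M → ℝ≥0∞, Measurable F ∧ (∃ L : ℝ≥0∞, L ≠ ∞ ∧ ∀ x, F x ≤ L) ∧
      (∀ x ∈ E, (n : ℝ≥0∞) ≤ ∫⁻ y, g x y * F y ∂μ) ∧ ∫⁻ x, F x ^ p ∂μ ≤ n * D := by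
    intro n
    induction n with
    | zero =>
      exact ⟨0, measurable_const, ⟨0, by simp, by simp⟩, by simp, by
        simp [ENNReal.zero_rpow_of_pos (by linarith : 0 < p)]⟩
    | succ n ih =>
      obtain ⟨F, hF, ⟨L, hL, hFL⟩, hFE, hFp⟩ := ih
      obtain ⟨f, hf, ⟨K, hK, hfK⟩, hfE, hfp, hf1⟩ := h (L ^ (p - 1))⁻¹ (by
        rw [ENNReal.inv_pos]; exact ENNReal.rpow_ne_top_of_nonneg hp1.le hL)
      refine ⟨fun x => F x + f x, hF.add hf, ⟨L + K, by finiteness,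
        fun x => add_le_add (hFL x) (hfK x)⟩, fun x hx => ?_, ?_⟩
      · push_cast
        simp only [mul_add]
        exact (add_le_add (hFE x hx) (hfE x hx)).trans (le_lintegral_add _ _)
      · calc ∫⁻ x, (F x + f x) ^ p ∂μ
            ≤ ∫⁻ x, F x ^ p + C * (L ^ (p - 1) * f x + f x ^ p) ∂μ := by
              refine lintegral_mono fun x => (hadd _ _ (ne_top_of_le_ne_top hL (hFL x))
                (ne_top_of_le_ne_top hK (hfK x))).trans ?_
              have := hFL x
              gcongr
          _ = ∫⁻ x, F x ^ p ∂μ + C * (L ^ (p - 1) * ∫⁻ x, f x ∂μ + ∫⁻ x, f x ^ p ∂μ) := by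
              rw [lintegral_add_left (hF.pow_const p),
                lintegral_const_mul' _ _ hC, lintegral_add_left (hf.const_mul _),
                lintegral_const_mul _ hf]
          _ ≤ n * D + C * (1 + A) := by
              gcongr
              exact (mul_le_mul_right hf1 _).trans (ENNReal.mul_inv_le_one _)
          _ = (n + 1 : ℕ) * D := by rw [← hD]; push_cast; ring
  have hbound : ∀ n : ℕ, rcapK μ p g E ≤ ((n + 1 : ℕ) : ℝ≥0∞) ^ (1 - p) * D := by
    intro n
    obtain ⟨F, hF, -, hFE, hFp⟩ := hsum (n + 1)
    have hN0 : ((n + 1 : ℕ) : ℝ≥0∞) ≠ 0 := by simp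
    have hN1 : ((n + 1 : ℕ) : ℝ≥0∞) ≠ ∞ := natCast_ne_top _
    generalize ((n + 1 : ℕ) : ℝ≥0∞) = N at *
    calc rcapK μ p g E ≤ ∫⁻ x, (N⁻¹ * F x) ^ p ∂μ := by
          refine rcapK_le (hF.const_mul _) fun x hx => ?_
          calc 1 = N⁻¹ * N := (ENNReal.inv_mul_cancel hN0 hN1).symm
            _ ≤ N⁻¹ * ∫⁻ y, g x y * F y ∂μ := by gcongr; exact hFE x hx
            _ ≤ ∫⁻ y, N⁻¹ * (g x y * F y) ∂μ := lintegral_const_mul_le _ _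
            _ = ∫⁻ y, g x y * (N⁻¹ * F y) ∂μ := by simp only [mul_left_comm]
      _ = N ^ (-p) * ∫⁻ x, F x ^ p ∂μ := by
          simp only [ENNReal.mul_rpow_of_nonneg _ _ (by linarith : 0 ≤ p)]
          rw [lintegral_const_mul _ (hF.pow_const p), ENNReal.inv_rpow, ENNReal.rpow_neg]
      _ ≤ N ^ (-p) * (N * D) := by gcongr
      _ = N ^ (1 - p) * D := by
          rw [← mul_assoc, sub_eq_neg_add, ENNReal.rpow_add _ _ hN0 hN1, ENNReal.rpow_one]
  have hlim : Tendsto (fun n : ℕ => ((n + 1 : ℕ) : ℝ≥0∞) ^ (1 - p) * D) atTop (nhds 0) := by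
    have h1 : Tendsto (fun n : ℕ => ((n + 1 : ℕ) : ℝ≥0∞)) atTop (nhds ∞) :=
      ENNReal.tendsto_nat_nhds_top.comp (tendsto_add_atTop_nat 1)
    have h2 := (ENNReal.continuous_rpow_const (y := 1 - p)).tendsto ∞ |>.comp h1
    rw [ENNReal.top_rpow_of_neg (by linarith)] at h2
    simpa using ENNReal.Tendsto.mul_const h2 (Or.inr hDtop)
  exact nonpos_iff_eq_zero.1 (ge_of_tendsto' hlim hbound)

theorem ENNReal.exists_pos_lt_rpow_le {s ρ : ℝ} (hs : 0 < s) {δ ε : ℝ≥0∞}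
    (hδ : δ < ENNReal.ofReal ρ) (hε : 0 < ε) :
    ∃ r : ℝ, 0 < r ∧ r < ρ ∧ δ < ENNReal.ofReal r ∧ ENNReal.ofReal r ^ s ≤ δ ^ s + ε := by
  have hδt : δ ≠ ∞ := hδ.ne_top
  have hcont : Tendsto (fun r : ℝ => ENNReal.ofReal r ^ s) (nhdsWithin δ.toReal (Ioi δ.toReal))
      (nhds (δ ^ s)) := by
    have h := ((ENNReal.continuous_rpow_const (y := s)).comp ENNReal.continuous_ofReal).tendsto
      δ.toReal
    simp only [Function.comp_apply, ofReal_toReal hδt] at h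
    exact h.mono_left nhdsWithin_le_nhds
  have hlt : δ ^ s < δ ^ s + ε :=
    ENNReal.lt_add_right (ENNReal.rpow_ne_top_of_nonneg hs.le hδt) hε.ne'
  have hρ : δ.toReal < ρ := (lt_ofReal_iff_toReal_lt hδt).1 hδ
  obtain ⟨r, hr1, hr2, hr3⟩ := ((hcont.eventually_lt_const hlt).and
    (Ioo_mem_nhdsGT hρ)).exists
  exact ⟨r, toReal_nonneg.trans_lt hr2, hr3, (lt_ofReal_iff_toReal_lt hδt).2 hr2, hr1.le⟩

/-- A compact set of finite `s`-dimensional Hausdorff measure has finite covers by arbitrarily small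
balls with centers in a given set whose closure contains it, with a bound on the sum of the `s`-th
powers of the radii that does not depend on the size of the balls. -/
theorem IsCompact.exists_finset_cover_ball_of_hausdorffMeasure {M : Type*} [MetricSpace M]
    [MeasurableSpace M] [BorelSpace M] {K A : Set M} (hK : IsCompact K) (hne₀ : K.Nonempty)
    (hKA : K ⊆ closure A)
    {s ρ : ℝ} (hs : 0 < s) (hρ : 0 < ρ) (hH : μH[s] K ≠ ∞) :
    ∃ (T : Finset ℕ) (x : ℕ → M) (r : ℕ → ℝ), (∀ i ∈ T, x i ∈ A ∧ 0 < r i ∧ r i < ρ) ∧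
      K ⊆ ⋃ i ∈ T, ball (x i) (r i) ∧
      ∑ i ∈ T, ENNReal.ofReal (r i) ^ s ≤ 2 ^ s * (μH[s] K + 2) := by
  obtain ⟨t, hKt, htd, hts⟩ : ∃ t : ℕ → Set M, K ⊆ ⋃ n, t n ∧
      (∀ n, ediam (t n) ≤ ENNReal.ofReal (ρ / 4)) ∧
      ∑' n, ⨆ _ : (t n).Nonempty, ediam (t n) ^ s < μH[s] K + 1 := by
    have h := ENNReal.lt_add_right hH one_ne_zero
    nth_rw 1 [Measure.hausdorffMeasure_apply] at h
    have h' := (le_iSup₂_of_le (f := fun (r : ℝ≥0∞) (_ : 0 < r) => ⨅ t : ℕ → Set M,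
      ⨅ (_ : K ⊆ ⋃ n, t n), ⨅ (_ : ∀ n, ediam (t n) ≤ r),
        ∑' n, ⨆ _ : (t n).Nonempty, ediam (t n) ^ s) (ENNReal.ofReal (ρ / 4))
        (ofReal_pos.2 (by positivity)) le_rfl).trans_lt h
    simp only [iInf_lt_iff] at h'
    obtain ⟨t, h1, h2, h3⟩ := h'
    exact ⟨t, h1, h2, h3⟩
  obtain ⟨ε, hε, hεs⟩ := ENNReal.exists_pos_sum_of_countable' (one_ne_zero (α := ℝ≥0∞)) ℕ
  have hball : ∀ i : ℕ, ∃ (x : M) (r : ℝ), (t i ∩ K).Nonempty →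
      x ∈ A ∧ 0 < r ∧ r < ρ ∧ t i ⊆ ball x r ∧
        ENNReal.ofReal r ^ s ≤ 2 ^ s * (ediam (t i) ^ s + ε i) := by
    intro i
    by_cases hne : (t i ∩ K).Nonempty
    · obtain ⟨z, hzt, hzK⟩ := hne
      obtain ⟨r, hr0, hrρ, hdr, hrs⟩ := ENNReal.exists_pos_lt_rpow_le (ρ := ρ / 2) hs
        ((htd i).trans_lt ((ofReal_lt_ofReal_iff (by positivity)).2 (by linarith))) (hε i)
      obtain ⟨x, hxA, hzx⟩ := Metric.mem_closure_iff.1 (hKA hzK) r hr0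
      refine ⟨x, 2 * r, fun _ => ⟨hxA, by linarith, by linarith, fun y hy => ?_, ?_⟩⟩
      · have hyz : dist y z < r := by
          rw [← ENNReal.ofReal_lt_ofReal_iff hr0, ← edist_dist]
          exact (edist_le_ediam_of_mem hy hzt).trans_lt hdr
        rw [mem_ball]
        linarith [dist_triangle y z x]
      · rw [ofReal_mul (by norm_num), ENNReal.mul_rpow_of_nonneg _ _ hs.le, ofReal_ofNat]
        gcongr
    · exact ⟨hne₀.some, 0, fun h => absurd h hne⟩
  choose x r hxr using hball
  obtain ⟨b, hbJ, hbfin, hKb⟩ := hK.elim_finite_subcover_image (b := {i | (t i ∩ K).Nonempty})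
    (c := fun i => ball (x i) (r i)) (fun _ _ => isOpen_ball) (fun y hy => by
      obtain ⟨i, hi⟩ := mem_iUnion.1 (hKt hy)
      exact mem_biUnion (show i ∈ {i | (t i ∩ K).Nonempty} from ⟨y, hi, hy⟩)
        ((hxr i ⟨y, hi, hy⟩).2.2.2.1 hi))
  refine ⟨hbfin.toFinset, x, r, fun i hi => ?_, by simpa using hKb, ?_⟩
  · obtain ⟨h1, h2, h3, -⟩ := hxr i (hbJ (hbfin.mem_toFinset.1 hi))
    exact ⟨h1, h2, h3⟩
  · calc ∑ i ∈ hbfin.toFinset, ENNReal.ofReal (r i) ^ s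
        ≤ ∑ i ∈ hbfin.toFinset, 2 ^ s * ((⨆ _ : (t i).Nonempty, ediam (t i) ^ s) + ε i) := by
          refine Finset.sum_le_sum fun i hi => ?_
          have hne := hbJ (hbfin.mem_toFinset.1 hi)
          rw [ciSup_pos (hne.mono inter_subset_left)]
          exact (hxr i hne).2.2.2.2
      _ ≤ ∑' i, 2 ^ s * ((⨆ _ : (t i).Nonempty, ediam (t i) ^ s) + ε i) :=
          ENNReal.sum_le_tsum _
      _ = 2 ^ s * (∑' i, (⨆ _ : (t i).Nonempty, ediam (t i) ^ s) + ∑' i, ε i) := by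
          rw [ENNReal.tsum_mul_left, ENNReal.tsum_add]
      _ ≤ 2 ^ s * (μH[s] K + 1 + 1) := by gcongr
      _ = 2 ^ s * (μH[s] K + 2) := by rw [add_assoc, one_add_one_eq_two]

theorem ENNReal.ofReal_rpow_le_edist_rpow {M : Type*} [PseudoMetricSpace M] {y z : M} {R t : ℝ}
    (hR : 0 < R) (ht : t ≤ 0) (h : dist y z ≤ R) :
    ENNReal.ofReal (R ^ t) ≤ edist y z ^ t := by
  obtain ⟨u, rfl⟩ : ∃ u, t = -u := ⟨-t, (neg_neg t).symm⟩
  rw [← ENNReal.ofReal_rpow_of_pos hR, ENNReal.rpow_neg, ENNReal.rpow_neg, ENNReal.inv_le_inv,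
    edist_dist]
  exact ENNReal.rpow_le_rpow (ofReal_le_ofReal h) (by linarith)

/-- A suitable multiple of the indicator of a ball of radius `r` has potential at least one on this
ball, with `p`-th moment of order `r ^ (d - 2 * p)` and first moment of order `r ^ (d - 2)`. -/
theorem exists_weight_ball {M : Type*} [MetricSpace M] [MeasurableSpace M] [BorelSpace M]
    {μ : Measure M} {g : M → M → ℝ≥0∞} {p d a c r : ℝ} (hp : 1 < p) (hd : 2 * p < d)
    (ha : 0 < a) (hc : 0 < c) (hr : 0 < r) {x : M} (hfin : μ (ball x r) ≠ ∞)
    (hvol : ENNReal.ofReal (a * r ^ d) ≤ μ (ball x r))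
    (hker : ∀ y ∈ ball x r, ∀ z ∈ ball x r, ENNReal.ofReal c * edist y z ^ (2 - d) ≤ g y z) :
    ∃ w : ℝ≥0∞, w ≠ ∞ ∧
      (∀ y ∈ ball x r, 1 ≤ ∫⁻ z, g y z * (ball x r).indicator (fun _ => w) z ∂μ) ∧
      w ^ p * μ (ball x r) ≤
        ENNReal.ofReal ((2 ^ (d - 2) / c) ^ p * a ^ (1 - p)) * ENNReal.ofReal r ^ (d - 2 * p) ∧
      w * μ (ball x r) ≤ ENNReal.ofReal (2 ^ (d - 2) / c) * ENNReal.ofReal r ^ (d - 2) := by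
  set m : ℝ := (μ (ball x r)).toReal
  have hμ : μ (ball x r) = ENNReal.ofReal m := (ofReal_toReal hfin).symm
  have hrd : 0 < a * r ^ d := by positivity
  have ham : a * r ^ d ≤ m := (ofReal_le_iff_le_toReal hfin).1 hvol
  have hm0 : 0 < m := hrd.trans_le ham
  have hw : 0 < 2 ^ (d - 2) / c * r ^ (d - 2) / m := by positivity
  refine ⟨ENNReal.ofReal (2 ^ (d - 2) / c * r ^ (d - 2) / m), ofReal_ne_top, fun y hy => ?_, ?_, ?_⟩
  · have hle : ∀ z, (ball x r).indicator (fun _ => ENNReal.ofReal m⁻¹) z ≤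
        g y z * (ball x r).indicator
          (fun _ => ENNReal.ofReal (2 ^ (d - 2) / c * r ^ (d - 2) / m)) z := by
      intro z
      by_cases hz : z ∈ ball x r
      · simp only [indicator_of_mem hz]
        have hyz : dist y z ≤ 2 * r := by
          have h1 := mem_ball.1 hy
          have h2 := mem_ball'.1 hz
          linarith [dist_triangle y x z]
        have hk : ENNReal.ofReal (c * (2 * r) ^ (2 - d)) ≤ g y z := by
          refine le_trans ?_ (hker y hy z hz)
          rw [ofReal_mul hc.le]
          gcongr
          exact ENNReal.ofReal_rpow_le_edist_rpow (by positivity) (by linarith) hyz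
        calc ENNReal.ofReal m⁻¹ = ENNReal.ofReal (c * (2 * r) ^ (2 - d)) *
              ENNReal.ofReal (2 ^ (d - 2) / c * r ^ (d - 2) / m) := by
              rw [← ofReal_mul (by positivity)]
              congr 1
              rw [← neg_sub d 2, Real.rpow_neg (by positivity),
                Real.mul_rpow (by norm_num) hr.le]
              field_simp
          _ ≤ _ := by gcongr
      · simp [indicator_of_notMem hz]
    calc (1 : ℝ≥0∞) = ∫⁻ z, (ball x r).indicator (fun _ => ENNReal.ofReal m⁻¹) z ∂μ := by
          rw [lintegral_indicator_const measurableSet_ball, hμ, ← ofReal_mul (by positivity),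
            inv_mul_cancel₀ hm0.ne', ofReal_one]
      _ ≤ _ := lintegral_mono hle
  · rw [hμ, ENNReal.ofReal_rpow_of_pos hw, ENNReal.ofReal_rpow_of_pos hr,
      ← ofReal_mul (by positivity), ← ofReal_mul (by positivity)]
    refine ofReal_le_ofReal ?_
    have hmp : m ^ (1 - p) ≤ (a * r ^ d) ^ (1 - p) :=
      Real.rpow_le_rpow_of_nonpos hrd ham (by linarith)
    calc (2 ^ (d - 2) / c * r ^ (d - 2) / m) ^ p * m
        = (2 ^ (d - 2) / c) ^ p * r ^ ((d - 2) * p) * m ^ (1 - p) := by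
          rw [Real.div_rpow (by positivity) hm0.le, Real.mul_rpow (by positivity) (by positivity),
            ← Real.rpow_mul hr.le, Real.rpow_sub hm0, Real.rpow_one]
          ring
      _ ≤ (2 ^ (d - 2) / c) ^ p * r ^ ((d - 2) * p) * (a * r ^ d) ^ (1 - p) := by gcongr
      _ = (2 ^ (d - 2) / c) ^ p * a ^ (1 - p) * r ^ (d - 2 * p) := by
          rw [Real.mul_rpow ha.le (by positivity), ← Real.rpow_mul hr.le,
            show d - 2 * p = (d - 2) * p + d * (1 - p) by ring, Real.rpow_add hr]
          ring
  · rw [hμ, ENNReal.ofReal_rpow_of_pos hr, ← ofReal_mul (by positivity),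
      ← ofReal_mul (by positivity), div_mul_cancel₀ _ hm0.ne']

theorem rcapK_eq_zero_of_isCompact {M : Type*} [MetricSpace M] [MeasurableSpace M] [BorelSpace M]
    {μ : Measure M} {g : M → M → ℝ≥0∞} {p d a c ρ : ℝ} (hp : 1 < p) (hd : 2 * p < d)
    (ha : 0 < a) (hc : 0 < c) (hρ : 0 < ρ) {A K : Set M} (hK : IsCompact K) (hKA : K ⊆ closure A)
    (hH : μH[d - 2 * p] K ≠ ∞) (hfin : ∀ x ∈ A, μ (ball x ρ) ≠ ∞)
    (hvol : ∀ x ∈ A, ∀ r, 0 < r → r < ρ → ENNReal.ofReal (a * r ^ d) ≤ μ (ball x r))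
    (hker : ∀ x ∈ A, ∀ y ∈ ball x ρ, ∀ z ∈ ball x ρ,
      ENNReal.ofReal c * edist y z ^ (2 - d) ≤ g y z) :
    rcapK μ p g K = 0 := by
  rcases K.eq_empty_or_nonempty with rfl | hne
  · refine nonpos_iff_eq_zero.1 ((rcapK_le (f := 0) measurable_const (by simp)).trans ?_)
    simp [ENNReal.zero_rpow_of_pos (by linarith : 0 < p)]
  set H : ℝ≥0∞ := 2 ^ (d - 2 * p) * (μH[d - 2 * p] K + 2)
  have hs : 0 < d - 2 * p := by linarith
  have hHtop : H ≠ ∞ := by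
    have : (2 : ℝ≥0∞) ^ (d - 2 * p) ≠ ∞ := ENNReal.rpow_ne_top_of_nonneg hs.le (by simp)
    finiteness
  set C₁ : ℝ≥0∞ := ENNReal.ofReal ((2 ^ (d - 2) / c) ^ p * a ^ (1 - p))
  set C₂ : ℝ≥0∞ := ENNReal.ofReal (2 ^ (d - 2) / c)
  refine rcapK_eq_zero_of_lintegral_small (A := C₁ * H) hp (by finiteness) fun ε hε => ?_
  obtain ⟨δ, hδ0, hδρ, hδε⟩ : ∃ δ : ℝ, 0 < δ ∧ δ < ρ ∧
      C₂ * (ENNReal.ofReal δ ^ (2 * p - 2) * H) < ε := by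
    have hlim : Tendsto (fun δ : ℝ => C₂ * (ENNReal.ofReal δ ^ (2 * p - 2) * H))
        (nhdsWithin 0 (Ioi 0)) (nhds 0) := by
      have h := ((ENNReal.continuous_rpow_const (y := 2 * p - 2)).comp
        ENNReal.continuous_ofReal).tendsto 0
      simp only [Function.comp_apply, ofReal_zero,
        ENNReal.zero_rpow_of_pos (by linarith : 0 < 2 * p - 2)] at h
      have h2 := ENNReal.Tendsto.const_mul (ENNReal.Tendsto.mul_const h (Or.inr hHtop))
        (Or.inr (ofReal_ne_top : C₂ ≠ ∞))
      simp only [zero_mul, mul_zero] at h2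
      exact h2.mono_left nhdsWithin_le_nhds
    obtain ⟨δ, h1, h2, h3⟩ := ((hlim.eventually_lt_const hε).and (Ioo_mem_nhdsGT hρ)).exists
    exact ⟨δ, h2, h3, h1⟩
  obtain ⟨T, x, r, hT, hcov, hsum⟩ :=
    hK.exists_finset_cover_ball_of_hausdorffMeasure hne hKA hs hδ0 hH
  have hweight : ∀ i : T, ∃ w : ℝ≥0∞, w ≠ ∞ ∧
      (∀ y ∈ ball (x i) (r i),
        1 ≤ ∫⁻ z, g y z * (ball (x i) (r i)).indicator (fun _ => w) z ∂μ) ∧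
      w ^ p * μ (ball (x i) (r i)) ≤ C₁ * ENNReal.ofReal (r i) ^ (d - 2 * p) ∧
      w * μ (ball (x i) (r i)) ≤ C₂ * ENNReal.ofReal (r i) ^ (d - 2) := by
    rintro ⟨i, hi⟩
    obtain ⟨hxA, hr0, hrδ⟩ := hT i hi
    have hsub : ball (x i) (r i) ⊆ ball (x i) ρ := ball_subset_ball (hrδ.trans hδρ).le
    exact exists_weight_ball hp hd ha hc hr0
      (ne_top_of_le_ne_top (hfin _ hxA) (measure_mono hsub))
      (hvol _ hxA _ hr0 (hrδ.trans hδρ))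
      fun y hy z hz => hker _ hxA y (hsub hy) z (hsub hz)
  choose w hwtop hwE hwp hw1 using hweight
  have hmeas : ∀ i : T, Measurable ((ball (x i) (r i)).indicator fun _ => w i) :=
    fun i => measurable_const.indicator measurableSet_ball
  have hp0 : 0 < p := by linarith
  refine ⟨fun y => ⨆ i : T, (ball (x i) (r i)).indicator (fun _ => w i) y, .iSup hmeas,
    ⟨∑ i, w i, ENNReal.sum_ne_top.2 fun i _ => hwtop i, fun y => iSup_le fun i => ?_⟩,
    fun y hy => ?_, ?_, ?_⟩
  · exact (indicator_le_self' (fun _ _ => zero_le) y).trans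
      (Finset.single_le_sum (fun _ _ => zero_le) (Finset.mem_univ i))
  · obtain ⟨i, hi, hyi⟩ := mem_iUnion₂.1 (hcov hy)
    refine (hwE ⟨i, hi⟩ y hyi).trans (lintegral_mono fun z => ?_)
    gcongr
    exact le_iSup (fun i : T => (ball (x i) (r i)).indicator (fun _ => w i) z) ⟨i, hi⟩
  · calc ∫⁻ y, (⨆ i : T, (ball (x i) (r i)).indicator (fun _ => w i) y) ^ p ∂μ
        ≤ ∫⁻ y, ∑' i : T, (ball (x i) (r i)).indicator (fun _ => w i ^ p) y ∂μ := by
          refine lintegral_mono fun y => (ENNReal.iSup_rpow_le_tsum hp0 _).trans_eq ?_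
          refine tsum_congr fun i => ?_
          by_cases hy : y ∈ ball (x i) (r i) <;> simp only [hy, not_false_eq_true,
            indicator_of_mem, indicator_of_notMem, ENNReal.zero_rpow_of_pos hp0]
      _ = ∑' i : T, w i ^ p * μ (ball (x i) (r i)) := by
          rw [lintegral_tsum fun i =>
            (measurable_const.indicator measurableSet_ball).aemeasurable]
          simp only [lintegral_indicator_const measurableSet_ball]
      _ ≤ ∑' i : T, C₁ * ENNReal.ofReal (r i) ^ (d - 2 * p) := ENNReal.tsum_le_tsum hwp
      _ = C₁ * ∑ i ∈ T, ENNReal.ofReal (r i) ^ (d - 2 * p) := by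
          rw [ENNReal.tsum_mul_left,
            Finset.tsum_subtype T fun i => ENNReal.ofReal (r i) ^ (d - 2 * p)]
      _ ≤ C₁ * H := by gcongr
  · calc ∫⁻ y, ⨆ i : T, (ball (x i) (r i)).indicator (fun _ => w i) y ∂μ
        ≤ ∫⁻ y, ∑' i : T, (ball (x i) (r i)).indicator (fun _ => w i) y ∂μ :=
          lintegral_mono fun y => iSup_le fun i =>
            ENNReal.le_tsum (f := fun i : T => (ball (x i) (r i)).indicator (fun _ => w i) y) i
      _ = ∑' i : T, w i * μ (ball (x i) (r i)) := by
          rw [lintegral_tsum fun i => (hmeas i).aemeasurable]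
          simp only [lintegral_indicator_const measurableSet_ball]
      _ ≤ ∑' i : T, C₂ * (ENNReal.ofReal δ ^ (2 * p - 2) *
            ENNReal.ofReal (r i) ^ (d - 2 * p)) := by
          refine ENNReal.tsum_le_tsum fun i => (hw1 i).trans ?_
          obtain ⟨-, hr0, hrδ⟩ := hT i i.2
          rw [show d - 2 = (2 * p - 2) + (d - 2 * p) by ring,
            ENNReal.rpow_add _ _ (ofReal_pos.2 hr0).ne' ofReal_ne_top]
          gcongr
          linarith
      _ = C₂ * (ENNReal.ofReal δ ^ (2 * p - 2) *
            ∑ i ∈ T, ENNReal.ofReal (r i) ^ (d - 2 * p)) := by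
          rw [ENNReal.tsum_mul_left, ENNReal.tsum_mul_left,
            Finset.tsum_subtype T fun i => ENNReal.ofReal (r i) ^ (d - 2 * p)]
      _ ≤ C₂ * (ENNReal.ofReal δ ^ (2 * p - 2) * H) := by gcongr
      _ ≤ ε := hδε.le

/-- if near every point of the closed set `S` the volume has positive
lower `d`-density and the resolvent density is bounded below by `c ϱ(y,z)^{2-d}`, and
if `d > 2p` and `H^{d-2p}(S) < ∞`, then `cap_{2,p}(S) = 0`. -/
theorem stmt11 {M : Type*} [MetricSpace M] [LocallyCompactSpace M]
    [TopologicalSpace.SeparableSpace M] [MeasurableSpace M] [BorelSpace M]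
    (μ : Measure M) [μ.Regular]
    (g : M → M → ℝ≥0∞) (hsymm : ∀ x y, g x y = g y x)
    (p d : ℝ) (hp : 1 < p) (hd : 2 * p < d)
    (S : Set M) (hS : IsClosed S)
    (hvol : ∀ x ∈ S,
      0 < Filter.liminf (fun r : ℝ => μ (Metric.ball x r) / ENNReal.ofReal (r ^ d))
        (nhdsWithin (0:ℝ) (Set.Ioi 0)))
    (hker : ∀ x ∈ S, ∃ r > (0:ℝ), ∃ c > (0:ℝ),
      ∀ y ∈ Metric.ball x r, ∀ z ∈ Metric.ball x r,
        ENNReal.ofReal c * edist y z ^ (2 - d) ≤ g y z)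
    (hH : μH[d - 2 * p] S < ⊤) :
    rcapK μ p g S = 0 := by
  have hp0 : 0 < p := by linarith
  have : SecondCountableTopology M := UniformSpace.secondCountable_of_separable M
  let ρ : ℕ → ℝ := fun n => 1 / ((n : ℝ) + 1)
  have hρ : ∀ n, 0 < ρ n := fun n => Nat.one_div_pos_of_nat
  let A : ℕ → Set M := fun n => {x ∈ S | μ (ball x (ρ n)) ≠ ∞ ∧
    (∀ r, 0 < r → r < ρ n → ENNReal.ofReal (ρ n * r ^ d) ≤ μ (ball x r)) ∧
    ∀ y ∈ ball x (ρ n), ∀ z ∈ ball x (ρ n), ENNReal.ofReal (ρ n) * edist y z ^ (2 - d) ≤ g y z}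
  have hA : ∀ x ∈ S, ∃ n, x ∈ A n := by
    intro x hx
    obtain ⟨r₁, hr₁, c, hc, hker⟩ := hker x hx
    obtain ⟨u, hu, hμu⟩ := μ.finiteAt_nhds x
    obtain ⟨r₂, hr₂, hball⟩ := Metric.mem_nhds_iff.1 hu
    obtain ⟨a, ha0, ha⟩ := ENNReal.lt_iff_exists_real_btwn.1 (hvol x hx)
    obtain ⟨r₃, hr₃, hvol⟩ := mem_nhdsGT_iff_exists_Ioo_subset.1 (eventually_lt_of_lt_liminf ha.2)
    have ha' : 0 < a := ofReal_pos.1 ha.1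
    obtain ⟨n, hn⟩ := exists_nat_one_div_lt
      (show 0 < min (min r₁ c) (min r₂ (min r₃ a)) from
        lt_min (lt_min hr₁ hc) (lt_min hr₂ (lt_min hr₃ ha')))
    simp only [lt_min_iff] at hn
    obtain ⟨⟨hn₁, hnc⟩, hn₂, hn₃, hna⟩ := hn
    refine ⟨n, hx, ?_, fun r hr0 hrn => ?_, fun y hy z hz => ?_⟩
    · exact ((measure_mono ((ball_subset_ball hn₂.le).trans hball)).trans_lt hμu).ne
    · have h := hvol ⟨hr0, hrn.trans hn₃⟩
      have hrd : 0 < r ^ d := Real.rpow_pos_of_pos hr0 d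
      calc ENNReal.ofReal (ρ n * r ^ d) ≤ ENNReal.ofReal (a * r ^ d) :=
            ofReal_le_ofReal (mul_le_mul_of_nonneg_right hna.le hrd.le)
        _ = ENNReal.ofReal a * ENNReal.ofReal (r ^ d) := ofReal_mul ha'.le
        _ ≤ μ (ball x r) := ENNReal.mul_le_of_le_div h.le
    · refine le_trans ?_ (hker y (ball_subset_ball hn₁.le hy) z (ball_subset_ball hn₁.le hz))
      exact mul_le_mul_left (ofReal_le_ofReal hnc.le) _
  have hcover : S ⊆ ⋃ i : ℕ × ℕ, S ∩ closure (A i.1) ∩ compactCovering M i.2 := by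
    intro x hx
    obtain ⟨n, hn⟩ := hA x hx
    obtain ⟨k, hk⟩ := mem_iUnion.1 ((iUnion_compactCovering M).symm ▸ mem_univ x)
    exact mem_iUnion.2 ⟨(n, k), ⟨hx, subset_closure hn⟩, hk⟩
  refine nonpos_iff_eq_zero.1 ((rcapK_mono hcover).trans_eq (rcapK_iUnion_eq_zero hp0 fun i => ?_))
  refine rcapK_eq_zero_of_isCompact hp hd (hρ i.1) (hρ i.1) (hρ i.1) (A := A i.1)
    ((isCompact_compactCovering M i.2).inter_left (hS.inter isClosed_closure))
    (fun x hx => hx.1.2) ?_ (fun x hx => hx.2.1) (fun x hx => hx.2.2.1) (fun x hx => hx.2.2.2)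
  exact ((measure_mono fun x hx => hx.1.1).trans_lt hH).ne
end

section
/- Let (M,ϱ) be a complete separable metric space, d > 4, ε > 0, and Σ ⊆ M closed with H^{d−4+ε}(Σ) > 0. Assume g_λ(x,y) ≤ c₆ ϱ(x,y)^{2−d} and μ(B(x,r)) ≤ c₇ r^d for all x,y ∈ M, r > 0. Then cap_{2,2}(Σ) > 0. Equivalently, cap_{2,2}(Σ) = 0 implies H^{d−4+ε}(Σ) = 0 for all ε > 0. -/
open Set MeasureTheory ENNReal Metric

/-- Dyadic upper bound for the Riesz kernel `ϱ(x,y)^{-p}`. -/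
theorem edist_rpow_neg_le_tsum {M : Type*} [MetricSpace M] (x y : M) {p : ℝ} (hp : 0 < p) :
    edist x y ^ (-p) ≤
      ∑' j : ℕ, (ball x ((2 : ℝ) ^ (-(j : ℝ)))).indicator
        (fun _ => (2 : ℝ≥0∞) ^ (((j : ℝ) + 1) * p)) y +
      ∑' j : ℕ, (ball x ((2 : ℝ) ^ ((j : ℝ) + 1))).indicator
        (fun _ => (2 : ℝ≥0∞) ^ (-((j : ℝ) * p))) y := by
  rcases eq_or_ne x y with rfl | hxy
  · refine le_add_right (le_trans le_top (top_le_iff.2 ?_))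
    refine eq_top_mono (ENNReal.tsum_le_tsum (f := fun _ => (1 : ℝ≥0∞)) fun j => ?_)
      (ENNReal.tsum_const_eq_top_of_ne_zero one_ne_zero)
    rw [indicator_of_mem (mem_ball_self (by positivity))]
    exact ENNReal.one_le_rpow (by norm_num) (by positivity)
  have hpos : 0 < dist y x := dist_pos.2 hxy.symm
  -- a lower bound on the distance turns into an upper bound on the kernel
  have key : ∀ a : ℝ, (2 : ℝ) ^ a ≤ dist y x → edist x y ^ (-p) ≤ (2 : ℝ≥0∞) ^ (-(a * p)) := by
    intro a ha
    rw [ENNReal.rpow_neg, ENNReal.rpow_neg, ENNReal.rpow_mul]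
    refine ENNReal.inv_le_inv.2 (ENNReal.rpow_le_rpow ?_ hp.le)
    rw [edist_comm, edist_dist, ← ENNReal.ofReal_ofNat 2, ENNReal.ofReal_rpow_of_pos two_pos]
    exact ENNReal.ofReal_le_ofReal ha
  obtain ⟨n, hn1, hn2⟩ := exists_mem_Ico_zpow hpos (one_lt_two (α := ℝ))
  rw [← Real.rpow_intCast] at hn1 hn2
  rcases n with j | j
  · refine le_add_left (le_trans ?_ (ENNReal.le_tsum j))
    rw [indicator_of_mem (mem_ball.2 (by simpa using hn2))]
    exact key j (by simpa using hn1)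
  · refine le_add_right (le_trans ?_ (ENNReal.le_tsum j))
    push_cast [Int.negSucc_eq] at hn1 hn2
    rw [neg_add, neg_add_cancel_right] at hn2
    rw [indicator_of_mem (mem_ball.2 hn2)]
    simpa only [neg_mul, neg_neg] using key _ hn1

/-- Cauchy–Schwarz inequality for the integral of a function over a set. -/
theorem setLIntegral_le_sqrt_mul_sqrt {M : Type*} [MeasurableSpace M] (μ : Measure M)
    {f : M → ℝ≥0∞} (hf : Measurable f) (B : Set M) :
    ∫⁻ y in B, f y ∂μ ≤ μ B ^ (1 / 2 : ℝ) * (∫⁻ y in B, f y ^ (2 : ℝ) ∂μ) ^ (1 / 2 : ℝ) := by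
  simpa using ENNReal.lintegral_mul_le_Lp_mul_Lq (μ.restrict B) Real.HolderConjugate.two_two
    (f := fun _ => 1) aemeasurable_const hf.aemeasurable

theorem tsum_two_rpow_neg_ne_top {a : ℝ} (ha : 0 < a) :
    ∑' j : ℕ, (2 : ℝ≥0∞) ^ (-((j : ℝ) * a)) ≠ ∞ := by
  have h : ∀ j : ℕ, (2 : ℝ≥0∞) ^ (-((j : ℝ) * a)) = ((2 : ℝ≥0∞) ^ (-a)) ^ j := by
    intro j
    rw [← ENNReal.rpow_natCast, ← ENNReal.rpow_mul]
    ring_nf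
  simp_rw [h, ENNReal.tsum_geometric]
  refine ENNReal.inv_ne_top.2 (tsub_pos_of_lt ?_).ne'
  exact ENNReal.rpow_lt_one_of_one_lt_of_neg (by norm_num) (by linarith)

/-- If `∫ f² ≤ q²` and `∫_{B(x,r)} f² ≤ q² r^{d-4+ε}` at all dyadic scales `r ≤ 1`, then the
Riesz potential of `f` at `x` is at most a constant multiple of `q`. -/
theorem exists_le_lintegral_edist_rpow {M : Type*} [MetricSpace M] [MeasurableSpace M]
    [BorelSpace M] (μ : Measure M) {d ε c₇ : ℝ} (hd : 4 < d) (hε : 0 < ε)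
    (hvol : ∀ (x : M) (r : ℝ), 0 < r → μ (ball x r) ≤ ENNReal.ofReal (c₇ * r ^ d)) :
    ∃ K : ℝ≥0∞, K ≠ ∞ ∧ ∀ (q : ℝ≥0∞) (f : M → ℝ≥0∞) (x : M), Measurable f →
      ∫⁻ y, f y ^ (2 : ℝ) ∂μ ≤ q ^ (2 : ℝ) →
      (∀ j : ℕ, ∫⁻ y in ball x ((2 : ℝ) ^ (-(j : ℝ))), f y ^ (2 : ℝ) ∂μ ≤
        q ^ (2 : ℝ) * 2 ^ (-((j : ℝ) * (d - 4 + ε)))) →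
      ∫⁻ y, edist x y ^ (2 - d) * f y ∂μ ≤ K * q := by
  have hvol' : ∀ (x : M) (a : ℝ), μ (ball x ((2 : ℝ) ^ a)) ^ (1 / 2 : ℝ) ≤
      ENNReal.ofReal c₇ ^ (1 / 2 : ℝ) * 2 ^ (a * d / 2) := by
    intro x a
    have h := hvol x (2 ^ a) (by positivity)
    rw [ENNReal.ofReal_mul' (by positivity), ← Real.rpow_mul zero_le_two,
      ← ENNReal.ofReal_rpow_of_pos two_pos, ENNReal.ofReal_ofNat] at h
    refine (ENNReal.rpow_le_rpow h (by norm_num)).trans_eq ?_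
    rw [ENNReal.mul_rpow_of_nonneg _ _ (by norm_num), ← ENNReal.rpow_mul]
    ring_nf
  set C := ENNReal.ofReal c₇ ^ (1 / 2 : ℝ)
  have hC' : C ≠ ∞ := ENNReal.rpow_ne_top_of_nonneg (by norm_num) ENNReal.ofReal_ne_top
  have h2 : ∀ a : ℝ, (2 : ℝ≥0∞) ^ a ≠ ∞ := fun a =>
    ENNReal.rpow_ne_top_of_ne_zero two_ne_zero ENNReal.ofNat_ne_top
  have hadd : ∀ a b : ℝ, (2 : ℝ≥0∞) ^ a * 2 ^ b = 2 ^ (a + b) := fun a b =>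
    (ENNReal.rpow_add a b two_ne_zero ENNReal.ofNat_ne_top).symm
  have hsq : ∀ q : ℝ≥0∞, (q ^ (2 : ℝ)) ^ (1 / 2 : ℝ) = q := fun q => by
    rw [← ENNReal.rpow_mul]; norm_num
  refine ⟨C * 2 ^ (d - 2) * ∑' j : ℕ, (2 : ℝ≥0∞) ^ (-((j : ℝ) * (ε / 2))) +
    C * 2 ^ (d / 2) * ∑' j : ℕ, (2 : ℝ≥0∞) ^ (-((j : ℝ) * (d / 2 - 2))), ?_, ?_⟩
  · exact ENNReal.add_ne_top.2
      ⟨ENNReal.mul_ne_top (ENNReal.mul_ne_top hC' (h2 _))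
        (tsum_two_rpow_neg_ne_top (by linarith)),
      ENNReal.mul_ne_top (ENNReal.mul_ne_top hC' (h2 _))
        (tsum_two_rpow_neg_ne_top (by linarith))⟩
  intro q f x hf htot hloc
  have hterm : ∀ a b : ℝ,
      ∫⁻ y, (ball x ((2 : ℝ) ^ a)).indicator (fun _ => (2 : ℝ≥0∞) ^ b) y * f y ∂μ ≤
      2 ^ b * (C * 2 ^ (a * d / 2) *
        (∫⁻ y in ball x ((2 : ℝ) ^ a), f y ^ (2 : ℝ) ∂μ) ^ (1 / 2 : ℝ)) := by
    intro a b
    simp_rw [← indicator_mul_left]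
    rw [lintegral_indicator measurableSet_ball, lintegral_const_mul _ hf]
    gcongr
    exact (setLIntegral_le_sqrt_mul_sqrt μ hf _).trans (by gcongr; exact hvol' x a)
  have hmeas : ∀ a b : ℝ, Measurable fun y =>
      (ball x ((2 : ℝ) ^ a)).indicator (fun _ => (2 : ℝ≥0∞) ^ b) y * f y := fun a b =>
    (measurable_const.indicator measurableSet_ball).mul hf
  calc ∫⁻ y, edist x y ^ (2 - d) * f y ∂μ
      ≤ ∫⁻ y, (∑' j : ℕ, (ball x ((2 : ℝ) ^ (-(j : ℝ)))).indicator
            (fun _ => (2 : ℝ≥0∞) ^ (((j : ℝ) + 1) * (d - 2))) y * f y +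
          ∑' j : ℕ, (ball x ((2 : ℝ) ^ ((j : ℝ) + 1))).indicator
            (fun _ => (2 : ℝ≥0∞) ^ (-((j : ℝ) * (d - 2)))) y * f y) ∂μ := by
        refine lintegral_mono fun y => ?_
        rw [ENNReal.tsum_mul_right, ENNReal.tsum_mul_right, ← add_mul, ← neg_sub d 2]
        gcongr
        exact edist_rpow_neg_le_tsum x y (by linarith)
    _ = ∑' j : ℕ, ∫⁻ y, (ball x ((2 : ℝ) ^ (-(j : ℝ)))).indicator
            (fun _ => (2 : ℝ≥0∞) ^ (((j : ℝ) + 1) * (d - 2))) y * f y ∂μ +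
          ∑' j : ℕ, ∫⁻ y, (ball x ((2 : ℝ) ^ ((j : ℝ) + 1))).indicator
            (fun _ => (2 : ℝ≥0∞) ^ (-((j : ℝ) * (d - 2)))) y * f y ∂μ := by
        rw [lintegral_add_left (Measurable.tsum fun j => hmeas _ _),
          lintegral_tsum fun j => (hmeas _ _).aemeasurable,
          lintegral_tsum fun j => (hmeas _ _).aemeasurable]
    _ ≤ ∑' j : ℕ, C * 2 ^ (d - 2) * 2 ^ (-((j : ℝ) * (ε / 2))) * q +
          ∑' j : ℕ, C * 2 ^ (d / 2) * 2 ^ (-((j : ℝ) * (d / 2 - 2))) * q := by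
        refine add_le_add (ENNReal.tsum_le_tsum fun j => (hterm _ _).trans ?_)
          (ENNReal.tsum_le_tsum fun j => (hterm _ _).trans ?_)
        · have h := ENNReal.rpow_le_rpow (hloc j) (z := 1 / 2) (by norm_num)
          rw [ENNReal.mul_rpow_of_nonneg _ _ (by norm_num), hsq, ← ENNReal.rpow_mul] at h
          refine (mul_le_mul_right (mul_le_mul_right h _) _).trans_eq ?_
          rw [mul_assoc C (2 ^ (d - 2)), hadd,
            show ∀ u v w : ℝ≥0∞, u * (C * v * (q * w)) = C * (u * v * w) * q by intros; ring,
            hadd, hadd]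
          ring_nf
        · have h := ENNReal.rpow_le_rpow ((setLIntegral_le_lintegral
            (ball x ((2 : ℝ) ^ ((j : ℝ) + 1))) _).trans htot) (z := 1 / 2) (by norm_num)
          rw [hsq] at h
          refine (mul_le_mul_right (mul_le_mul_right h _) _).trans_eq ?_
          rw [mul_assoc C (2 ^ (d / 2)), hadd,
            show ∀ u v : ℝ≥0∞, u * (C * v * q) = C * (u * v) * q by intros; ring, hadd]
          ring_nf
    _ = _ := by
        simp_rw [ENNReal.tsum_mul_right, ENNReal.tsum_mul_left, add_mul]

/-- Vitali covering of a set each of whose points is the centre of a dyadic ball of large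
`m`-mass. -/
theorem exists_countable_cover_closedBall {M : Type*} [MetricSpace M]
    [TopologicalSpace.SeparableSpace M] [MeasurableSpace M] [BorelSpace M]
    (m : Measure M) {s : ℝ} (hs : 0 < s) {η : ℝ≥0∞} (hη : η ≠ 0) (hη' : η ≠ ∞) (n : ℕ)
    (hm : m univ ≤ η * 2 ^ (-((n : ℝ) * s))) (S : Set M)
    (hS : ∀ x ∈ S, ∃ j : ℕ, η * 2 ^ (-((j : ℝ) * s)) < m (ball x ((2 : ℝ) ^ (-(j : ℝ))))) :
    ∃ (u : Set M) (t : M → Set M), u.Countable ∧ S ⊆ ⋃ i : u, t i ∧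
      (∀ i ∈ u, ediam (t i) ≤ 10 * 2 ^ (-(n : ℝ))) ∧
      ∑' i : u, ediam (t i) ^ s ≤ 10 ^ s * 2 ^ (-((n : ℝ) * s)) := by
  choose! j hj using hS
  have hjn : ∀ x ∈ S, (n : ℝ) ≤ j x := by
    intro x hx
    by_contra! hlt
    refine ((hj x hx).trans_le ((measure_mono (subset_univ _)).trans hm)).not_ge ?_
    gcongr
    norm_num
  obtain ⟨u, huS, hdisj, hcov⟩ := Vitali.exists_disjoint_subfamily_covering_enlargement_closedBall
    S id (fun x => (2 : ℝ) ^ (-(j x : ℝ))) 1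
    (fun x _ => Real.rpow_le_one_of_one_le_of_nonpos one_le_two (by simp)) 5 (by norm_num)
  have hu : u.Countable := hdisj.countable_of_nonempty_interior fun x _ =>
    ⟨x, ball_subset_interior_closedBall (mem_ball_self (by positivity))⟩
  have hdiam : ∀ x, ediam (closedBall x (5 * (2 : ℝ) ^ (-(j x : ℝ)))) ≤
      10 * 2 ^ (-(j x : ℝ)) := by
    intro x
    rw [← Metric.closedEBall_ofReal (by positivity)]
    refine ediam_closedEBall_le.trans_eq ?_
    rw [ENNReal.ofReal_mul (by norm_num), ← ENNReal.ofReal_rpow_of_pos two_pos, ← mul_assoc]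
    norm_num
  refine ⟨u, fun x => closedBall x (5 * (2 : ℝ) ^ (-(j x : ℝ))), hu, ?_, ?_, ?_⟩
  · intro x hx
    obtain ⟨b, hb, hsub⟩ := hcov x hx
    exact mem_iUnion.2 ⟨⟨b, hb⟩, hsub (mem_closedBall_self (by positivity))⟩
  · intro x hx
    refine (hdiam x).trans ?_
    gcongr
    · norm_num
    · exact_mod_cast hjn x (huS hx)
  · have := hu.to_subtype
    have hsum : ∑' i : u, m (closedBall (i : M) ((2 : ℝ) ^ (-(j i : ℝ)))) ≤ m univ := by
      refine (measure_iUnion (f := fun i : u => closedBall (i : M) ((2 : ℝ) ^ (-(j i : ℝ))))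
        (fun a b hab => hdisj a.2 b.2 (Subtype.coe_injective.ne hab))
        fun _ => measurableSet_closedBall).symm.le.trans (measure_mono (subset_univ _))
    rw [← ENNReal.mul_le_mul_iff_right hη hη', ← ENNReal.tsum_mul_left]
    calc ∑' i : u, η * ediam (closedBall (i : M) (5 * (2 : ℝ) ^ (-(j i : ℝ)))) ^ s
        ≤ ∑' i : u, 10 ^ s * m (closedBall (i : M) ((2 : ℝ) ^ (-(j i : ℝ)))) := by
          refine ENNReal.tsum_le_tsum fun i => ?_
          calc η * ediam (closedBall (i : M) (5 * (2 : ℝ) ^ (-(j i : ℝ)))) ^ s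
              ≤ η * (10 * 2 ^ (-(j i : ℝ))) ^ s := by gcongr; exact hdiam i
            _ = 10 ^ s * (η * 2 ^ (-((j i : ℝ) * s))) := by
              rw [ENNReal.mul_rpow_of_nonneg _ _ hs.le, ← ENNReal.rpow_mul, neg_mul]
              ring
            _ ≤ _ := by
              gcongr
              exact (hj i (huS i.2)).le.trans (measure_mono ball_subset_closedBall)
      _ ≤ 10 ^ s * (η * 2 ^ (-((n : ℝ) * s))) := by
          rw [ENNReal.tsum_mul_left]
          gcongr
          exact hsum.trans hm
      _ = _ := by ring

theorem tendsto_two_rpow_neg_mul {a : ℝ} (ha : 0 < a) :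
    Filter.Tendsto (fun n : ℕ => (2 : ℝ≥0∞) ^ (-((n : ℝ) * a))) Filter.atTop (nhds 0) :=
  ENNReal.tendsto_atTop_zero_of_tsum_ne_top (tsum_two_rpow_neg_ne_top ha)

/-- A set has zero `s`-dimensional Hausdorff measure if there are measures of arbitrarily small
total mass with `m(B(x,r)) > η r^s` for some dyadic `r ≤ 1` at every point `x` of the set. -/
theorem hausdorffMeasure_eq_zero_of_forall_dyadic {M : Type*} [MetricSpace M]
    [TopologicalSpace.SeparableSpace M] [MeasurableSpace M] [BorelSpace M]
    {s : ℝ} (hs : 0 < s) {η : ℝ≥0∞} (hη : η ≠ 0) (hη' : η ≠ ∞) (S : Set M)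
    (h : ∀ n : ℕ, ∃ m : Measure M, m univ ≤ η * 2 ^ (-((n : ℝ) * s)) ∧
      ∀ x ∈ S, ∃ j : ℕ, η * 2 ^ (-((j : ℝ) * s)) < m (ball x ((2 : ℝ) ^ (-(j : ℝ))))) :
    μH[s] S = 0 := by
  choose m hm hmS using h
  choose u t hu hcov hdiam hsum using fun n =>
    exists_countable_cover_closedBall (m n) hs hη hη' n (hm n) S (hmS n)
  have : ∀ n, Countable (u n) := fun n => (hu n).to_subtype
  have hr : Filter.Tendsto (fun n : ℕ => (10 : ℝ≥0∞) * 2 ^ (-(n : ℝ))) Filter.atTop (nhds 0) := by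
    simpa using ENNReal.Tendsto.const_mul (a := 10)
      (tendsto_two_rpow_neg_mul one_pos) (Or.inr (by norm_num))
  have hr' : Filter.Tendsto (fun n : ℕ => (10 : ℝ≥0∞) ^ s * 2 ^ (-((n : ℝ) * s)))
      Filter.atTop (nhds 0) := by
    simpa using ENNReal.Tendsto.const_mul (a := 10 ^ s) (tendsto_two_rpow_neg_mul hs)
      (Or.inr (ENNReal.rpow_ne_top_of_nonneg hs.le (by norm_num)))
  refine le_antisymm ((Measure.hausdorffMeasure_le_liminf_tsum s S _ hr
    (fun n (i : u n) => t n i) (.of_forall fun n i => hdiam n i i.2) (.of_forall hcov)).trans ?_)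
    zero_le
  rw [← hr'.liminf_eq]
  exact Filter.liminf_le_liminf (.of_forall hsum)

/-- on a complete separable metric space with `d > 4`, `ε > 0`,
`g_λ(x,y) ≤ c₆ ϱ(x,y)^{2-d}` and `μ(B(x,r)) ≤ c₇ r^d`, every closed set `S` with
`H^{d-4+ε}(S) > 0` has positive capacity: `cap_{2,2}(S) > 0` (equivalently,
`cap_{2,2}(S) = 0` forces `H^{d-4+ε}(S) = 0` for all `ε > 0`). -/
theorem stmt13 {M : Type*} [MetricSpace M] [CompleteSpace M]
    [TopologicalSpace.SeparableSpace M] [MeasurableSpace M] [BorelSpace M]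
    (μ : Measure M) (g : M → M → ℝ≥0∞) (d ε c₆ c₇ : ℝ)
    (hd : 4 < d) (hε : 0 < ε) (hc₆ : 0 < c₆) (hc₇ : 0 < c₇)
    (S : Set M) (hS : IsClosed S)
    (hg : ∀ x y : M, g x y ≤ ENNReal.ofReal c₆ * edist x y ^ (2 - d))
    (hvol : ∀ (x : M) (r : ℝ), 0 < r → μ (Metric.ball x r) ≤ ENNReal.ofReal (c₇ * r ^ d))
    (hH : 0 < μH[d - 4 + ε] S) :
    0 < rcapK μ 2 g S := by
  rw [pos_iff_ne_zero]
  intro hcap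
  obtain ⟨K, hK, hKq⟩ := exists_le_lintegral_edist_rpow μ hd hε hvol
  obtain ⟨q, hq, hq1⟩ := ENNReal.exists_nnreal_pos_mul_lt
    (ENNReal.mul_ne_top (ENNReal.ofReal_ne_top (r := c₆)) hK) one_ne_zero
  have hs : 0 < d - 4 + ε := by linarith
  have hq0 : (q : ℝ≥0∞) ^ (2 : ℝ) ≠ 0 :=
    (ENNReal.rpow_pos (by exact_mod_cast hq) ENNReal.coe_ne_top).ne'
  refine hH.ne' (hausdorffMeasure_eq_zero_of_forall_dyadic hs hq0
    (ENNReal.rpow_ne_top_of_nonneg (by norm_num) ENNReal.coe_ne_top) S fun n => ?_)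
  have hpos : 0 < (q : ℝ≥0∞) ^ (2 : ℝ) * 2 ^ (-((n : ℝ) * (d - 4 + ε))) :=
    ENNReal.mul_pos hq0 (ENNReal.rpow_pos two_pos ENNReal.ofNat_ne_top).ne'
  rw [← hcap, rcapK] at hpos
  simp only [iInf_lt_iff] at hpos
  obtain ⟨f, ⟨hf, hf1⟩, hfn⟩ := hpos
  refine ⟨μ.withDensity fun y => f y ^ (2 : ℝ), by simpa using hfn.le, fun x hx => ?_⟩
  by_contra! hloc
  simp_rw [withDensity_apply _ measurableSet_ball] at hloc
  have htot : ∫⁻ y, f y ^ (2 : ℝ) ∂μ ≤ (q : ℝ≥0∞) ^ (2 : ℝ) :=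
    hfn.le.trans (mul_le_of_le_one_right' ((ENNReal.rpow_le_rpow_of_exponent_le
      (by norm_num) (by simp only [neg_nonpos]; positivity)).trans_eq ENNReal.rpow_zero))
  refine (hf1 x hx).not_gt (lt_of_le_of_lt ?_ hq1)
  calc ∫⁻ y, g x y * f y ∂μ
      ≤ ∫⁻ y, ENNReal.ofReal c₆ * (edist x y ^ (2 - d) * f y) ∂μ :=
        lintegral_mono fun y => by
          rw [← mul_assoc]
          exact mul_le_mul_left (hg x y) _
    _ = ENNReal.ofReal c₆ * ∫⁻ y, edist x y ^ (2 - d) * f y ∂μ :=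
        lintegral_const_mul' _ _ ENNReal.ofReal_ne_top
    _ ≤ ENNReal.ofReal c₆ * (K * q) := by
        gcongr
        exact hKq q f x hf htot hloc
    _ = q * (ENNReal.ofReal c₆ * K) := by ring
end
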